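/- There exist constants ε₀ ∈ (0,1) and C > 0 with the following property. Let ν ∈ (0,1], k ∈ ℤ with |k| ≥ 1 and νk² ≤ 1, ε ∈ (0, ε₀], and λ ∈ ℝ. Let w_{Na} : [−1,1] → ℂ be twice continuously differentiable with w_{Na}(−1) = w_{Na}(1) = 0, set F(y) = −ν(w_{Na}''(y) − k²w_{Na}(y)) + ik(y−λ)w_{Na}(y) − ε·ν^{1/3}|k|^{2/3}w_{Na}(y), and let M ≥ 0 dominate F in H^{−1}. Define c₁ = −∫_{−1}^{1} (sinh(k(y+1))/sinh(2k))·w_{Na}(y) dy and c₂ = ∫_{−1}^{1} (sinh(k(1−y))/sinh(2k))·w_{Na}(y) dy. Then (1+|k(λ−1)|)^{3/4}·|c₁| + (1+|k(λ+1)|)^{3/4}·|c₂| ≤ C·ν^{−1/2}|k|^{−1/2}·M. -/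

import Mathlib

/-- The `L²` norm of a function on the interval `[-1,1]`. -/
noncomputable def nL2 (f : ℝ → ℂ) : ℝ :=
  (∫ y in Set.Icc (-1:ℝ) 1, ‖f y‖ ^ 2) ^ ((1:ℝ)/2)

/-- The `L²` pairing of two functions on the interval `[-1,1]`. -/
noncomputable def innI (f g : ℝ → ℂ) : ℂ :=
  ∫ y in Set.Icc (-1:ℝ) 1, f y * (starRingEnd ℂ) (g y)

/-- `M ≥ 0` dominates `F` in `H^{-1}` : `|⟨F, φ⟩| ≤ M ‖φ‖_{H¹}` for every `C¹` function
vanishing at `±1`. -/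
def Dominates (F : ℝ → ℂ) (M : ℝ) : Prop :=
  ∀ g : ℝ → ℂ, ContDiff ℝ 1 g → g (-1) = 0 → g 1 = 0 →
    ‖innI F g‖ ≤ M * ((nL2 g ^ 2 + nL2 (deriv g) ^ 2) ^ ((1:ℝ)/2))

/-!
Write `δ = (ν / |k|)^{1/3}` for the width of the critical layer around `y = lam`.

Pairing the equation with `conj w`, and with `conj w` times a cutoff that changes sign across the
critical layer, bounds `‖w'‖ + ‖w‖ / δ` by `M / ν`. A coefficient `∫ φ w`, where `φ` is the sinh
profile equal to `1` at the wall `y = 1`, is then estimated by duality: testing the equation with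
`φ / (y - lam - iδ)` produces `i k ∫ φ w` from the transport term, and the viscous terms are
controlled by the resolvent bound. That test function does not vanish at the wall, so `φ` is first
truncated by a layer of width `c⁻¹`. The layer contributes `c^{-3/2} ‖w'‖` to the coefficient, which
gives the weight `(1 + |k (lam - 1)|)^{3/4}` as soon as `(δ c)² = 1 + |lam - 1| / δ`. In the norms
of the test function the exponential decay of `φ` and of the layer away from the wall allows
`|y - lam|` to replace `|1 - lam|`, so the weight is paid for by the factor `1 / (y - lam - iδ)`.
The coefficient at `y = -1` is the one at `y = 1` for the reflected solution `y ↦ w (-y)`.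
-/

open MeasureTheory intervalIntegral
open scoped ComplexConjugate

section SquareIntegrals

lemma setIntegral_Icc_eq_intervalIntegral {E : Type*} [NormedAddCommGroup E] [NormedSpace ℝ E]
    {a b : ℝ} (hab : a ≤ b) (f : ℝ → E) : ∫ y in Set.Icc a b, f y = ∫ y in a..b, f y := by
  rw [integral_of_le hab, integral_Icc_eq_integral_Ioc]

lemma integral_norm_mul_norm_sq_le {a b : ℝ} (hab : a ≤ b) {f g : ℝ → ℂ}
    (hf : Continuous f) (hg : Continuous g) :
    (∫ y in a..b, ‖f y‖ * ‖g y‖) ^ 2 ≤ (∫ y in a..b, ‖f y‖ ^ 2) * ∫ y in a..b, ‖g y‖ ^ 2 := by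
  have memLp {h : ℝ → ℂ} (hh : Continuous h) :
      MemLp h (ENNReal.ofReal 2) (volume.restrict (Set.Icc a b)) := by
    simpa only [ENNReal.ofReal_ofNat] using
      (memLp_two_iff_integrable_sq_norm hh.aestronglyMeasurable.restrict).2
        (hh.norm.pow 2).continuousOn.integrableOn_Icc
  have hölder := integral_mul_norm_le_Lp_mul_Lq Real.HolderConjugate.two_two (memLp hf) (memLp hg)
  simp only [Real.rpow_two, ← Real.sqrt_eq_rpow, setIntegral_Icc_eq_intervalIntegral hab]
    at hölder
  have nonneg (h : ℝ → ℂ) : 0 ≤ ∫ y in a..b, ‖h y‖ ^ 2 :=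
    integral_nonneg hab fun y _ => sq_nonneg ‖h y‖
  rw [← Real.sqrt_mul (nonneg f)] at hölder
  exact (Real.le_sqrt (integral_nonneg hab fun y _ => by positivity)
    (mul_nonneg (nonneg f) (nonneg g))).1 hölder

lemma integral_comp_neg_one_one {E : Type*} [NormedAddCommGroup E] [NormedSpace ℝ E]
    (f : ℝ → E) : ∫ y in (-1 : ℝ)..1, f (-y) = ∫ y in (-1 : ℝ)..1, f y := by
  rw [integral_comp_neg, neg_neg]

lemma nL2_nonneg (f : ℝ → ℂ) : 0 ≤ nL2 f :=
  Real.rpow_nonneg (integral_nonneg fun y => sq_nonneg ‖f y‖) _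

lemma nL2_sq (f : ℝ → ℂ) : nL2 f ^ 2 = ∫ y in (-1 : ℝ)..1, ‖f y‖ ^ 2 := by
  rw [nL2, ← Real.sqrt_eq_rpow, Real.sq_sqrt (integral_nonneg fun y => sq_nonneg ‖f y‖),
    setIntegral_Icc_eq_intervalIntegral (by norm_num)]

lemma nL2_conj (f : ℝ → ℂ) : nL2 (fun y => conj (f y)) = nL2 f := by
  simp only [nL2, RCLike.norm_conj]

lemma nL2_neg (f : ℝ → ℂ) : nL2 (fun y => -f y) = nL2 f := by
  simp only [nL2, norm_neg]

lemma nL2_comp_neg (f : ℝ → ℂ) : nL2 (fun y => f (-y)) = nL2 f := by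
  refine (sq_eq_sq₀ (nL2_nonneg _) (nL2_nonneg _)).1 ?_
  rw [nL2_sq, nL2_sq, integral_comp_neg_one_one fun y => ‖f y‖ ^ 2]

lemma norm_integral_le_nL2_mul_nL2 {f g h : ℝ → ℂ} (hf : Continuous f) (hg : Continuous g)
    {c : ℝ} (hc : 0 ≤ c) (hh : ∀ y, ‖h y‖ ≤ c * (‖f y‖ * ‖g y‖)) :
    ‖∫ y in (-1 : ℝ)..1, h y‖ ≤ c * (nL2 f * nL2 g) := by
  have cauchy_schwarz : ∫ y in (-1 : ℝ)..1, ‖f y‖ * ‖g y‖ ≤ nL2 f * nL2 g := by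
    refine le_of_sq_le_sq ?_ (mul_nonneg (nL2_nonneg f) (nL2_nonneg g))
    rw [mul_pow, nL2_sq, nL2_sq]
    exact integral_norm_mul_norm_sq_le (by norm_num) hf hg
  calc ‖∫ y in (-1 : ℝ)..1, h y‖
      ≤ ∫ y in (-1 : ℝ)..1, c * (‖f y‖ * ‖g y‖) :=
        norm_integral_le_of_norm_le (by norm_num) (.of_forall fun y _ => hh y)
          (Continuous.intervalIntegrable (by fun_prop) _ _)
    _ = c * ∫ y in (-1 : ℝ)..1, ‖f y‖ * ‖g y‖ := intervalIntegral.integral_const_mul _ _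
    _ ≤ c * (nL2 f * nL2 g) := by gcongr

lemma norm_integral_mul_le_nL2 {f g : ℝ → ℂ} (hf : Continuous f) (hg : Continuous g) :
    ‖∫ y in (-1 : ℝ)..1, f y * g y‖ ≤ nL2 f * nL2 g := by
  simpa only [one_mul] using norm_integral_le_nL2_mul_nL2 (h := fun y => f y * g y) hf hg
    one_pos.le fun y => by rw [norm_mul, one_mul]

lemma nL2_le_mul_nL2 {f g : ℝ → ℂ} (hf : Continuous f) (hg : Continuous g) {c : ℝ}
    (hc : 0 ≤ c) (hfg : ∀ y, ‖f y‖ ≤ c * ‖g y‖) : nL2 f ≤ c * nL2 g := by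
  refine le_of_sq_le_sq ?_ (mul_nonneg hc (nL2_nonneg g))
  rw [mul_pow, nL2_sq, nL2_sq, ← intervalIntegral.integral_const_mul]
  refine integral_mono_on (by norm_num) (Continuous.intervalIntegrable (by fun_prop) _ _)
    (Continuous.intervalIntegrable (by fun_prop) _ _) fun y _ => ?_
  rw [← mul_pow]
  exact pow_le_pow_left₀ (norm_nonneg _) (hfg y) 2

lemma nL2_add_le {f g : ℝ → ℂ} (hf : Continuous f) (hg : Continuous g) :
    nL2 (fun y => f y + g y) ≤ nL2 f + nL2 g := by
  have nL2_eq_lpNorm {h : ℝ → ℂ} (hh : Continuous h) :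
      nL2 h = lpNorm h 2 (volume.restrict (Set.Icc (-1) 1)) := by
    rw [lpNorm_eq_integral_norm_rpow_toReal (by norm_num) (by norm_num)
      hh.aestronglyMeasurable.restrict]
    simp [nL2]
  change nL2 (f + g) ≤ _
  rw [nL2_eq_lpNorm hf, nL2_eq_lpNorm hg, nL2_eq_lpNorm (hf.add hg)]
  exact lpNorm_add_le ((memLp_two_iff_integrable_sq_norm hf.aestronglyMeasurable.restrict).2
    (hf.norm.pow 2).continuousOn.integrableOn_Icc) (by norm_num)

end SquareIntegrals

section WeakSolutions

/-- The test functions of the weak formulation: `C¹` functions that vanish at `±1`. -/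
structure IsDirichlet (g : ℝ → ℂ) : Prop where
  contDiff : ContDiff ℝ 1 g
  apply_neg_one : g (-1) = 0
  apply_one : g 1 = 0

/-- The bilinear form of the resolvent operator
`w ↦ -ν (w'' - k² w) + i k (y - lam) w - μ w`. There is no conjugation in `g`. -/
noncomputable def resolventForm (ν k μ lam : ℝ) (w g : ℝ → ℂ) : ℂ :=
  ν * (∫ y in (-1 : ℝ)..1, deriv w y * deriv g y)
    + ∫ y in (-1 : ℝ)..1,
        ((ν * k ^ 2 - μ : ℝ) + Complex.I * (k * (y - lam) : ℝ)) * (w y * g y)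

/-- `w` is a weak Dirichlet solution of the resolvent equation whose right-hand side has
`H⁻¹` norm at most `M`. -/
structure IsResolventSolution (ν k μ lam M : ℝ) (w : ℝ → ℂ) : Prop where
  isDirichlet : IsDirichlet w
  bound_nonneg : 0 ≤ M
  norm_form_le : ∀ g, IsDirichlet g →
    ‖resolventForm ν k μ lam w g‖ ≤ M * (nL2 g + nL2 (deriv g))

variable {ν k μ lam M : ℝ} {w g : ℝ → ℂ}

lemma IsDirichlet.conj (hg : IsDirichlet g) : IsDirichlet fun y => conj (g y) where
  contDiff := Complex.conjCLE.contDiff.comp hg.contDiff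
  apply_neg_one := by simp only [hg.apply_neg_one, map_zero]
  apply_one := by simp only [hg.apply_one, map_zero]

lemma IsDirichlet.ofReal_mul {χ : ℝ → ℝ} (hχ : ContDiff ℝ 1 χ) (hg : IsDirichlet g) :
    IsDirichlet fun y => (χ y : ℂ) * g y where
  contDiff := (Complex.ofRealCLM.contDiff.comp hχ).mul hg.contDiff
  apply_neg_one := by rw [hg.apply_neg_one, mul_zero]
  apply_one := by rw [hg.apply_one, mul_zero]

lemma IsDirichlet.comp_neg (hg : IsDirichlet g) : IsDirichlet fun y => g (-y) where
  contDiff := hg.contDiff.comp contDiff_neg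
  apply_neg_one := by rw [neg_neg, hg.apply_one]
  apply_one := hg.apply_neg_one

lemma deriv_conj_eq (g : ℝ → ℂ) : deriv (fun y => conj (g y)) = fun y => conj (deriv g y) :=
  deriv.star'

lemma resolventForm_eq_integral (hw : ContDiff ℝ 2 w) (hg : IsDirichlet g) :
    resolventForm ν k μ lam w g = ∫ y in (-1 : ℝ)..1,
      (-(ν : ℂ) * (deriv (deriv w) y - (k : ℂ) ^ 2 * w y)
        + Complex.I * k * ((y : ℂ) - lam) * w y - μ * w y) * g y := by
  have hw' : ContDiff ℝ 1 (deriv w) := hw.deriv'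
  have cont_w'' : Continuous (deriv (deriv w)) := hw'.continuous_deriv_one
  have cont_w : Continuous w := hw.continuous
  have cont_g : Continuous g := hg.contDiff.continuous
  have by_parts : ∫ y in (-1 : ℝ)..1, deriv w y * deriv g y
      = -∫ y in (-1 : ℝ)..1, deriv (deriv w) y * g y := by
    rw [integral_mul_deriv_eq_deriv_mul
      (fun y _ => (hw'.differentiable_one y).hasDerivAt)
      (fun y _ => (hg.contDiff.differentiable_one y).hasDerivAt)
      (cont_w''.intervalIntegrable _ _) (hg.contDiff.continuous_deriv_one.intervalIntegrable _ _),
      hg.apply_one, hg.apply_neg_one, mul_zero, mul_zero, sub_zero, zero_sub]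
  rw [resolventForm, by_parts, ← intervalIntegral.integral_neg,
    ← intervalIntegral.integral_const_mul,
    ← intervalIntegral.integral_add (Continuous.intervalIntegrable (by fun_prop) _ _)
      (Continuous.intervalIntegrable (by fun_prop) _ _)]
  congr 1 with y
  push_cast
  ring

lemma IsResolventSolution.of_dominates (hw : ContDiff ℝ 2 w) (hw_left : w (-1) = 0)
    (hw_right : w 1 = 0) (hM : 0 ≤ M)
    (hF : Dominates (fun y : ℝ => -(ν : ℂ) * (deriv (deriv w) y - (k : ℂ) ^ 2 * w y)
      + Complex.I * k * ((y : ℂ) - lam) * w y - μ * w y) M) :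
    IsResolventSolution ν k μ lam M w where
  isDirichlet := ⟨hw.of_le one_le_two, hw_left, hw_right⟩
  bound_nonneg := hM
  norm_form_le g hg := by
    have dual_bound := hF _ hg.conj.contDiff hg.conj.apply_neg_one hg.conj.apply_one
    rw [innI, setIntegral_Icc_eq_intervalIntegral (by norm_num), deriv_conj_eq, nL2_conj,
      nL2_conj, ← Real.sqrt_eq_rpow] at dual_bound
    simp only [Complex.conj_conj] at dual_bound
    rw [resolventForm_eq_integral hw hg]
    refine dual_bound.trans (mul_le_mul_of_nonneg_left ?_ hM)
    exact Real.sqrt_le_iff.2 ⟨add_nonneg (nL2_nonneg _) (nL2_nonneg _), by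
      nlinarith [mul_nonneg (nL2_nonneg g) (nL2_nonneg (deriv g))]⟩

lemma IsResolventSolution.comp_neg (hw : IsResolventSolution ν k μ lam M w) :
    IsResolventSolution ν (-k) μ (-lam) M fun y => w (-y) where
  isDirichlet := hw.isDirichlet.comp_neg
  bound_nonneg := hw.bound_nonneg
  norm_form_le g hg := by
    have deriv_reflect (f : ℝ → ℂ) : deriv (fun y => f (-y)) = fun y => -deriv f (-y) :=
      funext fun y => deriv_comp_neg f y
    have form_reflect : resolventForm ν (-k) μ (-lam) (fun y => w (-y)) g
        = resolventForm ν k μ lam w fun y => g (-y) := by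
      simp only [resolventForm, deriv_reflect]
      rw [← integral_comp_neg_one_one fun y => deriv w y * _,
        ← integral_comp_neg_one_one fun y => _ * (w y * g (-y))]
      simp only [neg_neg]
      congr 3 with y
      · ring
      · push_cast
        ring
    have dual_bound := hw.norm_form_le _ hg.comp_neg
    rwa [deriv_reflect, nL2_neg, nL2_comp_neg, nL2_comp_neg, ← form_reflect] at dual_bound

end WeakSolutions

section ResolventEstimate

variable {ν k μ lam M : ℝ} {w : ℝ → ℂ}

lemma deriv_ofReal_mul_conj {χ : ℝ → ℝ} (hχ : ContDiff ℝ 1 χ) (hw : ContDiff ℝ 1 w) :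
    deriv (fun y => (χ y : ℂ) * conj (w y))
      = fun y => ((deriv χ y : ℝ) : ℂ) * conj (w y) + χ y * conj (deriv w y) := by
  ext y
  exact ((hχ.differentiable_one y).hasDerivAt.ofReal_comp.mul
    (hw.differentiable_one y).hasDerivAt.star).deriv

lemma nL2_ofReal_mul_conj_le {χ : ℝ → ℝ} {f : ℝ → ℂ} (hχ : Continuous χ) (hf : Continuous f)
    {B : ℝ} (χ_le : ∀ y, |χ y| ≤ B) : nL2 (fun y => χ y * conj (f y)) ≤ B * nL2 f := by
  refine nL2_le_mul_nL2 (by fun_prop) hf ((abs_nonneg _).trans (χ_le 0)) fun y => ?_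
  rw [norm_mul, RCLike.norm_conj, Complex.norm_real, Real.norm_eq_abs]
  gcongr
  exact χ_le y

lemma resolventForm_ofReal_mul_conj {χ : ℝ → ℝ} (hχ : ContDiff ℝ 1 χ) (hw : ContDiff ℝ 1 w) :
    resolventForm ν k μ lam w (fun y => χ y * conj (w y))
      = (ν * (∫ y in (-1 : ℝ)..1, χ y * ‖deriv w y‖ ^ 2)
          + (ν * k ^ 2 - μ) * ∫ y in (-1 : ℝ)..1, χ y * ‖w y‖ ^ 2 : ℝ)
        + ν * (∫ y in (-1 : ℝ)..1, deriv χ y * (deriv w y * conj (w y)))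
        + Complex.I * (k * ∫ y in (-1 : ℝ)..1, (y - lam) * χ y * ‖w y‖ ^ 2 : ℝ) := by
  have cont_w := hw.continuous
  have cont_χ := hχ.continuous
  have leading : ∫ y in (-1 : ℝ)..1, deriv w y * deriv (fun y => (χ y : ℂ) * conj (w y)) y
      = (∫ y in (-1 : ℝ)..1, deriv χ y * (deriv w y * conj (w y)))
        + ((∫ y in (-1 : ℝ)..1, χ y * ‖deriv w y‖ ^ 2 : ℝ) : ℂ) := by
    rw [deriv_ofReal_mul_conj hχ hw, ← intervalIntegral.integral_ofReal,
      ← intervalIntegral.integral_add (Continuous.intervalIntegrable (by fun_prop) _ _)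
        (Continuous.intervalIntegrable (by fun_prop) _ _)]
    congr 1 with y
    push_cast
    rw [← Complex.mul_conj']
    ring
  have zeroth_order : ∫ y in (-1 : ℝ)..1,
        ((ν * k ^ 2 - μ : ℝ) + Complex.I * (k * (y - lam) : ℝ)) * (w y * (χ y * conj (w y)))
      = ((ν * k ^ 2 - μ) * ∫ y in (-1 : ℝ)..1, χ y * ‖w y‖ ^ 2 : ℝ)
        + Complex.I * (k * ∫ y in (-1 : ℝ)..1, (y - lam) * χ y * ‖w y‖ ^ 2 : ℝ) := by
    rw [← intervalIntegral.integral_const_mul, ← intervalIntegral.integral_const_mul,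
      ← intervalIntegral.integral_ofReal, ← intervalIntegral.integral_ofReal,
      ← intervalIntegral.integral_const_mul,
      ← intervalIntegral.integral_add (Continuous.intervalIntegrable (by fun_prop) _ _)
        (Continuous.intervalIntegrable (by fun_prop) _ _)]
    congr 1 with y
    push_cast
    rw [← Complex.mul_conj']
    ring
  rw [resolventForm, leading, zeroth_order]
  push_cast
  ring

lemma IsResolventSolution.energy_le (hw : IsResolventSolution ν k μ lam M w) :
    ν * nL2 (deriv w) ^ 2 + (ν * k ^ 2 - μ) * nL2 w ^ 2 ≤ M * (nL2 w + nL2 (deriv w)) := by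
  have identity := resolventForm_ofReal_mul_conj (ν := ν) (k := k) (μ := μ) (lam := lam)
    (contDiff_const (c := (1 : ℝ))) hw.isDirichlet.contDiff
  have dual_bound := hw.norm_form_le _ hw.isDirichlet.conj
  rw [deriv_conj_eq, nL2_conj, nL2_conj] at dual_bound
  simp only [Complex.ofReal_one, one_mul, deriv_const, Complex.ofReal_zero, zero_mul,
    intervalIntegral.integral_zero, mul_zero, add_zero, ← nL2_sq] at identity
  have re_form : (resolventForm ν k μ lam w fun y => conj (w y)).re
      = ν * nL2 (deriv w) ^ 2 + (ν * k ^ 2 - μ) * nL2 w ^ 2 := by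
    rw [identity, Complex.add_re, Complex.I_mul_re, Complex.ofReal_re, Complex.ofReal_im,
      neg_zero, add_zero]
  rw [← re_form]
  exact (Complex.re_le_norm _).trans dual_bound

lemma IsResolventSolution.abs_mul_integral_le (hw : IsResolventSolution ν k μ lam M w)
    (hν : 0 ≤ ν) {χ : ℝ → ℝ} (hχ : ContDiff ℝ 1 χ) {B : ℝ} (χ_le : ∀ y, |χ y| ≤ 1)
    (χ'_le : ∀ y, |deriv χ y| ≤ B) :
    |k * ∫ y in (-1 : ℝ)..1, (y - lam) * χ y * ‖w y‖ ^ 2|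
      ≤ M * (nL2 (deriv w) + (1 + B) * nL2 w) + ν * (B * (nL2 (deriv w) * nL2 w)) := by
  have hB : 0 ≤ B := (abs_nonneg _).trans (χ'_le 0)
  have hw_diff := hw.isDirichlet.contDiff
  have cont_w := hw_diff.continuous
  have cont_w' := hw_diff.continuous_deriv_one
  have cont_χ := hχ.continuous
  have cont_χ' := hχ.continuous_deriv_one
  have cross_le : ‖∫ y in (-1 : ℝ)..1, deriv χ y * (deriv w y * conj (w y))‖
      ≤ B * (nL2 (deriv w) * nL2 w) := by
    refine norm_integral_le_nL2_mul_nL2 cont_w' cont_w hB fun y => ?_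
    rw [norm_mul, norm_mul, RCLike.norm_conj, Complex.norm_real, Real.norm_eq_abs]
    gcongr
    exact χ'_le y
  have test_le : nL2 (fun y => χ y * conj (w y)) ≤ 1 * nL2 w :=
    nL2_ofReal_mul_conj_le cont_χ cont_w χ_le
  have test'_le : nL2 (deriv fun y => χ y * conj (w y)) ≤ B * nL2 w + 1 * nL2 (deriv w) := by
    rw [deriv_ofReal_mul_conj hχ hw_diff]
    exact (nL2_add_le (by fun_prop) (by fun_prop)).trans
      (add_le_add (nL2_ofReal_mul_conj_le cont_χ' cont_w χ'_le)
        (nL2_ofReal_mul_conj_le cont_χ cont_w' χ_le))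
  have identity := congrArg Complex.im
    (resolventForm_ofReal_mul_conj (ν := ν) (k := k) (μ := μ) (lam := lam) hχ hw_diff)
  rw [Complex.add_im, Complex.add_im, Complex.ofReal_im, zero_add, Complex.im_ofReal_mul,
    Complex.I_mul_im, Complex.ofReal_re] at identity
  rw [← sub_eq_iff_eq_add'.2 identity]
  refine (abs_sub _ _).trans (add_le_add ?_ ?_)
  · refine ((Complex.abs_im_le_norm _).trans
      (hw.norm_form_le _ (hw.isDirichlet.conj.ofReal_mul hχ))).trans ?_
    exact mul_le_mul_of_nonneg_left (by linarith) hw.bound_nonneg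
  · rw [abs_mul, abs_of_nonneg hν]
    exact mul_le_mul_of_nonneg_left ((Complex.abs_im_le_norm _).trans cross_le) hν

lemma IsDirichlet.integral_mul_norm_sq_le (hw : IsDirichlet w) {ψ ψ' : ℝ → ℝ}
    (hψ : ∀ y, HasDerivAt ψ (ψ' y) y) (hψ' : Continuous ψ') {B : ℝ} (ψ_le : ∀ y, |ψ y| ≤ B) :
    ∫ y in (-1 : ℝ)..1, ψ' y * ‖w y‖ ^ 2 ≤ 2 * B * (nL2 (deriv w) * nL2 w) := by
  have hB : 0 ≤ B := (abs_nonneg _).trans (ψ_le 0)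
  have cont_w := hw.contDiff.continuous
  have cont_w' := hw.contDiff.continuous_deriv_one
  have hasDerivAt_w (y : ℝ) : HasDerivAt w (deriv w y) y :=
    (hw.contDiff.differentiable_one y).hasDerivAt
  have hasDerivAt_conj_w (y : ℝ) : HasDerivAt (fun y => conj (w y)) (conj (deriv w y)) y :=
    (hasDerivAt_w y).star
  have by_parts : ((∫ y in (-1 : ℝ)..1, ψ' y * ‖w y‖ ^ 2 : ℝ) : ℂ) = -∫ y in (-1 : ℝ)..1,
      (ψ y : ℂ) * (deriv w y * conj (w y) + w y * conj (deriv w y)) := by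
    rw [integral_mul_deriv_eq_deriv_mul (u := fun y => (ψ y : ℂ)) (v := fun y => w y * conj (w y))
      (fun y _ => (hψ y).ofReal_comp) (fun y _ => (hasDerivAt_w y).mul (hasDerivAt_conj_w y))
      (Continuous.intervalIntegrable (by fun_prop) _ _)
      (Continuous.intervalIntegrable (by fun_prop) _ _), hw.apply_one, hw.apply_neg_one,
      ← intervalIntegral.integral_ofReal]
    simp only [Complex.mul_conj', zero_mul, mul_zero, sub_zero, zero_sub, neg_neg]
    push_cast
    rfl
  refine (Real.le_norm_self _).trans ?_
  rw [← Complex.norm_real, by_parts, norm_neg]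
  refine norm_integral_le_nL2_mul_nL2 cont_w' cont_w (by positivity) fun y => ?_
  calc ‖(ψ y : ℂ) * (deriv w y * conj (w y) + w y * conj (deriv w y))‖
      ≤ |ψ y| * (‖deriv w y‖ * ‖w y‖ + ‖w y‖ * ‖deriv w y‖) := by
        rw [norm_mul, Complex.norm_real, Real.norm_eq_abs]
        gcongr
        refine (norm_add_le _ _).trans_eq ?_
        simp only [norm_mul, RCLike.norm_conj]
    _ ≤ B * (‖deriv w y‖ * ‖w y‖ + ‖w y‖ * ‖deriv w y‖) := by
        gcongr
        exact ψ_le y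
    _ = 2 * B * (‖deriv w y‖ * ‖w y‖) := by ring

/-- The cutoff across a critical layer, in the layer variable: odd, and such that
`1 - t * layerCutoff t = (1 + t²)⁻¹` is an exact derivative with bounded primitive. -/
noncomputable def layerCutoff (t : ℝ) : ℝ := t / (1 + t ^ 2)

lemma hasDerivAt_layerCutoff (t : ℝ) :
    HasDerivAt layerCutoff ((1 - t ^ 2) / (1 + t ^ 2) ^ 2) t := by
  refine ((hasDerivAt_id t).fun_div (((hasDerivAt_id t).pow 2).const_add 1)
    (by positivity : 1 + t ^ 2 ≠ 0)).congr_deriv ?_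
  simp only [id, Pi.pow_apply]
  ring

lemma contDiff_layerCutoff : ContDiff ℝ 1 layerCutoff :=
  contDiff_id.div (by fun_prop) fun t => by positivity

lemma abs_layerCutoff_le_one (t : ℝ) : |layerCutoff t| ≤ 1 := by
  rw [layerCutoff, abs_div, abs_of_pos (by positivity : 0 < 1 + t ^ 2),
    div_le_one (by positivity), ← sq_abs]
  nlinarith [sq_nonneg (|t| - 1), abs_nonneg t]

lemma abs_deriv_layerCutoff_le_one (t : ℝ) : |deriv layerCutoff t| ≤ 1 := by
  rw [(hasDerivAt_layerCutoff t).deriv, abs_div, abs_of_pos (by positivity : 0 < (1 + t ^ 2) ^ 2),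
    div_le_one (by positivity), abs_le]
  constructor <;> nlinarith [sq_nonneg t, sq_nonneg (t ^ 2)]

lemma mul_layerCutoff (t : ℝ) : t * layerCutoff t = 1 - (1 + t ^ 2)⁻¹ := by
  rw [layerCutoff]
  field_simp
  ring

lemma IsDirichlet.nL2_sq_le (hw : IsDirichlet w) {δ : ℝ} (hδ : 0 < δ) (lam : ℝ) :
    nL2 w ^ 2 ≤ 4 * δ * (nL2 (deriv w) * nL2 w) + ∫ y in (-1 : ℝ)..1,
      (y - lam) / δ * layerCutoff ((y - lam) / δ) * ‖w y‖ ^ 2 := by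
  have cont_w := hw.contDiff.continuous
  have cont_cutoff : Continuous layerCutoff := contDiff_layerCutoff.continuous
  have cont_inv : Continuous fun y : ℝ => (1 + ((y - lam) / δ) ^ 2)⁻¹ :=
    Continuous.inv₀ (by fun_prop) fun y => by positivity
  have hasDerivAt_primitive (y : ℝ) :
      HasDerivAt (fun y => δ * Real.arctan ((y - lam) / δ)) (1 + ((y - lam) / δ) ^ 2)⁻¹ y := by
    refine ((((hasDerivAt_id y).sub_const lam).div_const δ).arctan.const_mul δ).congr_deriv ?_
    simp only [id]
    field_simp
  have primitive_le (y : ℝ) : |δ * Real.arctan ((y - lam) / δ)| ≤ 2 * δ := by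
    rw [abs_mul, abs_of_pos hδ, mul_comm]
    gcongr
    exact abs_le.2 ⟨by linarith [Real.neg_pi_div_two_lt_arctan ((y - lam) / δ), Real.pi_lt_four],
      by linarith [Real.arctan_lt_pi_div_two ((y - lam) / δ), Real.pi_lt_four]⟩
  calc nL2 w ^ 2
      = (∫ y in (-1 : ℝ)..1, (1 + ((y - lam) / δ) ^ 2)⁻¹ * ‖w y‖ ^ 2) + ∫ y in (-1 : ℝ)..1,
          (y - lam) / δ * layerCutoff ((y - lam) / δ) * ‖w y‖ ^ 2 := by
        rw [nL2_sq, ← intervalIntegral.integral_add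
          (Continuous.intervalIntegrable (by fun_prop) _ _)
          (Continuous.intervalIntegrable (by fun_prop) _ _)]
        congr 1 with y
        rw [mul_layerCutoff]
        ring
    _ ≤ _ := by
        linarith [hw.integral_mul_norm_sq_le hasDerivAt_primitive cont_inv primitive_le]

lemma IsResolventSolution.critical_layer_le (hw : IsResolventSolution ν k μ lam M w)
    (hν : 0 ≤ ν) {δ : ℝ} (hδ : 0 < δ) (hδ_le : δ ≤ 1) :
    |k| * δ * (∫ y in (-1 : ℝ)..1, (y - lam) / δ * layerCutoff ((y - lam) / δ) * ‖w y‖ ^ 2)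
      ≤ M * (nL2 (deriv w) + 2 * (nL2 w / δ)) + ν * (nL2 (deriv w) * (nL2 w / δ)) := by
  have contDiff_cutoff : ContDiff ℝ 1 fun y => layerCutoff ((y - lam) / δ) :=
    contDiff_layerCutoff.comp (by fun_prop)
  have cutoff'_le (y : ℝ) : |deriv (fun y => layerCutoff ((y - lam) / δ)) y| ≤ 1 / δ := by
    have chain_rule : HasDerivAt (fun y => layerCutoff ((y - lam) / δ))
        (deriv layerCutoff ((y - lam) / δ) * (1 / δ)) y :=
      (contDiff_layerCutoff.differentiable_one _).hasDerivAt.comp y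
        (((hasDerivAt_id y).sub_const lam).div_const δ)
    rw [chain_rule.deriv, abs_mul, abs_of_pos (one_div_pos.2 hδ)]
    exact mul_le_of_le_one_left (by positivity) (abs_deriv_layerCutoff_le_one _)
  have cutoff_bound := hw.abs_mul_integral_le hν contDiff_cutoff
    (fun y => abs_layerCutoff_le_one _) cutoff'_le
  have rescale : ∫ y in (-1 : ℝ)..1, (y - lam) * layerCutoff ((y - lam) / δ) * ‖w y‖ ^ 2
      = δ * ∫ y in (-1 : ℝ)..1, (y - lam) / δ * layerCutoff ((y - lam) / δ) * ‖w y‖ ^ 2 := by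
    rw [← intervalIntegral.integral_const_mul]
    congr 1 with y
    field_simp
  rw [rescale, abs_mul, abs_mul, abs_of_pos hδ, ← mul_assoc] at cutoff_bound
  have le_div : nL2 w ≤ nL2 w / δ := le_div_self (nL2_nonneg w) hδ hδ_le
  calc _ ≤ |k| * δ * |∫ y in (-1 : ℝ)..1,
          (y - lam) / δ * layerCutoff ((y - lam) / δ) * ‖w y‖ ^ 2| := by
        gcongr
        exact le_abs_self _
    _ ≤ _ := cutoff_bound
    _ = M * (nL2 (deriv w) + (nL2 w + nL2 w / δ)) + ν * (nL2 (deriv w) * (nL2 w / δ)) := by ring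
    _ ≤ _ := by
        gcongr
        · exact hw.bound_nonneg
        · linarith

lemma le_of_coupled_quadratic {a b m ε : ℝ} (ha : 0 ≤ a) (hb : 0 ≤ b) (hm : 0 ≤ m)
    (hε : ε ≤ 1 / 400) (hab : b ^ 2 ≤ 5 * a * b + m * (a + 2 * b))
    (hba : a ^ 2 ≤ m * (a + b) + ε * b ^ 2) : a ≤ 15 * m ∧ b ≤ 105 * m := by
  have b_le : b ≤ 6 * a + 3 * m := by
    by_contra! h
    nlinarith
  have ha' : a ≤ 15 * m := by
    have : ε * b ^ 2 ≤ 1 / 400 * (6 * a + 3 * m) ^ 2 := by gcongr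
    by_contra! h
    nlinarith
  exact ⟨ha', by linarith⟩

theorem IsResolventSolution.resolvent_estimate {δ ε : ℝ} (hk : k ≠ 0) (hδ : 0 < δ) (hδ_le : δ ≤ 1)
    (hε : ε ≤ 1 / 400) (hw : IsResolventSolution (|k| * δ ^ 3) k (ε * (|k| * δ)) lam M w) :
    nL2 (deriv w) ≤ 15 * (M / (|k| * δ ^ 3)) ∧ nL2 w / δ ≤ 105 * (M / (|k| * δ ^ 3)) := by
  have hν : 0 < |k| * δ ^ 3 := by positivity
  have le_div : nL2 w ≤ nL2 w / δ := le_div_self (nL2_nonneg w) hδ hδ_le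
  set ν := |k| * δ ^ 3 with ν_def
  set a := nL2 (deriv w)
  set b := nL2 w / δ with b_def
  have ha : 0 ≤ a := nL2_nonneg _
  have hb : 0 ≤ b := div_nonneg (nL2_nonneg _) hδ.le
  have w_eq : nL2 w = δ * b := by rw [b_def]; field_simp
  have layer := hw.critical_layer_le hν.le hδ hδ_le
  have split := hw.isDirichlet.nL2_sq_le hδ lam
  have energy := hw.energy_le
  rw [w_eq] at split energy le_div
  refine le_of_coupled_quadratic ha hb (div_nonneg hw.bound_nonneg hν.le) hε ?_ ?_
  · refine le_of_mul_le_mul_left ?_ hν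
    calc ν * b ^ 2 = |k| * δ * (δ * b) ^ 2 := by ring
      _ ≤ |k| * δ * (4 * δ * (a * (δ * b))) + (M * (a + 2 * b) + ν * (a * b)) := by
          refine (mul_le_mul_of_nonneg_left split (by positivity)).trans ?_
          rw [mul_add]
          gcongr
      _ = ν * (5 * a * b + M / ν * (a + 2 * b)) := by
          field_simp
          rw [ν_def]
          ring
  · refine le_of_mul_le_mul_left ?_ hν
    calc ν * a ^ 2 ≤ M * (δ * b + a) + ε * (|k| * δ) * (δ * b) ^ 2 := by
          linarith [mul_nonneg (mul_nonneg hν.le (sq_nonneg k)) (sq_nonneg (δ * b))]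
      _ ≤ M * (a + b) + ν * (ε * b ^ 2) := by
          rw [ν_def]
          nlinarith [mul_le_mul_of_nonneg_left le_div hw.bound_nonneg]
      _ = ν * (M / ν * (a + b) + ε * b ^ 2) := by field_simp

end ResolventEstimate

section Duality

variable {k lam M : ℝ} {w : ℝ → ℂ}

/-- The complex Cauchy kernel `(y - lam - iδ)⁻¹`, which inverts the transport part
`y - lam` of the resolvent operator away from the critical layer of width `δ`. -/
noncomputable def cauchyKernel (lam δ y : ℝ) : ℂ := ((y - lam : ℝ) - δ * Complex.I)⁻¹

lemma cauchyKernel_denom_ne_zero {δ : ℝ} (hδ : δ ≠ 0) (lam y : ℝ) :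
    ((y - lam : ℝ) : ℂ) - δ * Complex.I ≠ 0 := fun h =>
  hδ (by simpa using congrArg Complex.im h)

lemma resolventForm_mul_cauchyKernel {ν μ δ : ℝ} (hδ : δ ≠ 0) (hw : ContDiff ℝ 1 w) {f : ℝ → ℂ}
    (hG : ContDiff ℝ 1 fun y => f y * cauchyKernel lam δ y) :
    resolventForm ν k μ lam w (fun y => f y * cauchyKernel lam δ y)
      = ν * (∫ y in (-1 : ℝ)..1, deriv w y * deriv (fun y => f y * cauchyKernel lam δ y) y)
        + (ν * k ^ 2 - μ - k * δ : ℝ)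
          * (∫ y in (-1 : ℝ)..1, w y * (f y * cauchyKernel lam δ y))
        + Complex.I * k * ∫ y in (-1 : ℝ)..1, f y * w y := by
  have cont_w := hw.continuous
  have cont_G := hG.continuous
  have f_eq (y : ℝ) : f y = ((y - lam : ℝ) - δ * Complex.I) * (f y * cauchyKernel lam δ y) := by
    rw [cauchyKernel, mul_left_comm, mul_inv_cancel₀ (cauchyKernel_denom_ne_zero hδ lam y), mul_one]
  have cont_f : Continuous f := by
    rw [funext f_eq]
    fun_prop
  rw [resolventForm, add_assoc]
  congr 1
  rw [← intervalIntegral.integral_const_mul, ← intervalIntegral.integral_const_mul,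
    ← intervalIntegral.integral_add (Continuous.intervalIntegrable (by fun_prop) _ _)
      (Continuous.intervalIntegrable (by fun_prop) _ _)]
  congr 1 with y
  nth_rw 3 [f_eq y]
  push_cast
  linear_combination (k * δ * (w y * (f y * cauchyKernel lam δ y))) * Complex.I_sq

lemma abs_resolvent_coefficient_le {δ ε : ℝ} (hδ : 0 ≤ δ) (hkδ : |k| * δ ≤ 1) (hε : |ε| ≤ 1) :
    |(|k| * δ ^ 3) * k ^ 2 - ε * (|k| * δ) - k * δ| ≤ 3 * (|k| * δ) := by
  have hkδ_nonneg : 0 ≤ |k| * δ := by positivity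
  have cube_nonneg : 0 ≤ (|k| * δ ^ 3) * k ^ 2 := by positivity
  have cube_le : (|k| * δ ^ 3) * k ^ 2 ≤ |k| * δ := by
    rw [← sq_abs k]
    calc _ = (|k| * δ) * (|k| * δ) ^ 2 := by ring
      _ ≤ |k| * δ := mul_le_of_le_one_right hkδ_nonneg (pow_le_one₀ hkδ_nonneg hkδ)
  have damping_le : |ε * (|k| * δ)| ≤ |k| * δ := by
    rw [abs_mul, abs_of_nonneg hkδ_nonneg]
    exact mul_le_of_le_one_left hkδ_nonneg hε
  have shift_le : |k * δ| ≤ |k| * δ := by rw [abs_mul, abs_of_nonneg hδ]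
  rw [abs_le] at damping_le shift_le ⊢
  constructor <;> linarith

lemma IsResolventSolution.abs_mul_norm_pairing_le {δ ε : ℝ} (hδ : 0 < δ) (hkδ : |k| * δ ≤ 1)
    (hε : |ε| ≤ 1) (hw : IsResolventSolution (|k| * δ ^ 3) k (ε * (|k| * δ)) lam M w) {f : ℝ → ℂ}
    (hG : IsDirichlet fun y => f y * cauchyKernel lam δ y) :
    |k| * ‖∫ y in (-1 : ℝ)..1, f y * w y‖
      ≤ M * (nL2 (fun y => f y * cauchyKernel lam δ y)
          + nL2 (deriv fun y => f y * cauchyKernel lam δ y))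
        + (|k| * δ ^ 3 * (nL2 (deriv w) * nL2 (deriv fun y => f y * cauchyKernel lam δ y))
          + 3 * (|k| * δ) * (nL2 w * nL2 fun y => f y * cauchyKernel lam δ y)) := by
  have identity := resolventForm_mul_cauchyKernel (k := k) (ν := |k| * δ ^ 3)
    (μ := ε * (|k| * δ)) hδ.ne' hw.isDirichlet.contDiff hG.contDiff
  have form_le := hw.norm_form_le _ hG
  have coeff_le := abs_resolvent_coefficient_le hδ.le hkδ hε
  set G := fun y => f y * cauchyKernel lam δ y
  have leading_le := norm_integral_mul_le_nL2 hw.isDirichlet.contDiff.continuous_deriv_one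
    hG.contDiff.continuous_deriv_one
  have lower_le := norm_integral_mul_le_nL2 hw.isDirichlet.contDiff.continuous
    hG.contDiff.continuous
  calc |k| * ‖∫ y in (-1 : ℝ)..1, f y * w y‖
      = ‖Complex.I * k * ∫ y in (-1 : ℝ)..1, f y * w y‖ := by
        rw [norm_mul, norm_mul, Complex.norm_I, one_mul, Complex.norm_real, Real.norm_eq_abs]
    _ = ‖resolventForm (|k| * δ ^ 3) k (ε * (|k| * δ)) lam w G
          - ((|k| * δ ^ 3 : ℝ) * (∫ y in (-1 : ℝ)..1, deriv w y * deriv G y)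
            + (|k| * δ ^ 3 * k ^ 2 - ε * (|k| * δ) - k * δ : ℝ)
              * ∫ y in (-1 : ℝ)..1, w y * G y)‖ := by
        rw [identity]
        congr 1
        ring
    _ ≤ _ := by
        refine (norm_sub_le _ _).trans
          (add_le_add form_le ((norm_add_le _ _).trans (add_le_add ?_ ?_)))
        · rw [norm_mul, Complex.norm_real, Real.norm_of_nonneg (by positivity)]
          gcongr
        · rw [norm_mul, Complex.norm_real, Real.norm_eq_abs]
          gcongr

theorem IsResolventSolution.duality_estimate {δ ε : ℝ} (hk : k ≠ 0) (hδ : 0 < δ) (hδ_le : δ ≤ 1)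
    (hkδ : |k| * δ ≤ 1) (hε : |ε| ≤ 1 / 400)
    (hw : IsResolventSolution (|k| * δ ^ 3) k (ε * (|k| * δ)) lam M w) {f : ℝ → ℂ}
    (hG : IsDirichlet fun y => f y * cauchyKernel lam δ y) :
    |k| * ‖∫ y in (-1 : ℝ)..1, f y * w y‖
      ≤ 320 * M * (nL2 (deriv fun y => f y * cauchyKernel lam δ y)
          + nL2 (fun y => f y * cauchyKernel lam δ y) / δ) := by
  obtain ⟨w'_le, w_le⟩ := hw.resolvent_estimate hk hδ hδ_le (le_of_abs_le hε)
  have pairing_le := hw.abs_mul_norm_pairing_le hδ hkδ (hε.trans (by norm_num)) hG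
  have hM := hw.bound_nonneg
  set G := fun y => f y * cauchyKernel lam δ y
  have hG_nonneg : 0 ≤ nL2 G := nL2_nonneg G
  have hG'_nonneg : 0 ≤ nL2 (deriv G) := nL2_nonneg (deriv G)
  calc |k| * ‖∫ y in (-1 : ℝ)..1, f y * w y‖
      ≤ M * (nL2 G + nL2 (deriv G)) + (|k| * δ ^ 3 * (15 * (M / (|k| * δ ^ 3)) * nL2 (deriv G))
          + 3 * (|k| * δ) * (δ * (105 * (M / (|k| * δ ^ 3))) * nL2 G)) := by
        refine pairing_le.trans ?_
        gcongr
        exact (div_le_iff₀' hδ).1 w_le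
    _ = M * (nL2 G + nL2 (deriv G)) + (15 * M * nL2 (deriv G) + 315 * M * (nL2 G / δ)) := by
        field_simp
        ring
    _ ≤ 320 * M * (nL2 (deriv G) + nL2 G / δ) := by
        nlinarith [mul_le_mul_of_nonneg_left (le_div_self hG_nonneg hδ hδ_le) hM,
          mul_nonneg hM hG'_nonneg, mul_nonneg hM (div_nonneg hG_nonneg hδ.le)]

end Duality

section WallEstimates

/-- Exponential decay at rate `c` away from the wall `y = 1`. -/
noncomputable def wallDecay (c y : ℝ) : ℝ := Real.exp (-(c * (1 - y)))

lemma wallDecay_pos (c y : ℝ) : 0 < wallDecay c y := Real.exp_pos _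

lemma wallDecay_le_one {c y : ℝ} (hc : 0 ≤ c) (hy : y ≤ 1) : wallDecay c y ≤ 1 :=
  Real.exp_le_one_iff.2 (neg_nonpos.2 (mul_nonneg hc (sub_nonneg.2 hy)))

lemma wallDecay_anti {c d y : ℝ} (hcd : c ≤ d) (hy : y ≤ 1) : wallDecay d y ≤ wallDecay c y :=
  Real.exp_le_exp.2 (neg_le_neg (mul_le_mul_of_nonneg_right hcd (sub_nonneg.2 hy)))

lemma hasDerivAt_wallDecay (c y : ℝ) : HasDerivAt (wallDecay c) (c * wallDecay c y) y := by
  refine ((((hasDerivAt_id y).const_sub 1).const_mul c).neg.exp).congr_deriv ?_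
  simp only [wallDecay, id, Pi.neg_apply]
  ring

lemma contDiff_wallDecay (c : ℝ) : ContDiff ℝ 1 (wallDecay c) := by
  unfold wallDecay
  fun_prop

lemma integral_wallDecay_le {c : ℝ} (hc : 0 < c) (a : ℝ) : ∫ y in a..1, wallDecay c y ≤ 1 / c := by
  have cont : Continuous (wallDecay c) := (contDiff_wallDecay c).continuous
  have primitive (y : ℝ) : HasDerivAt (fun y => wallDecay c y / c) (wallDecay c y) y := by
    refine ((hasDerivAt_wallDecay c y).div_const c).congr_deriv ?_
    field_simp
  rw [integral_eq_sub_of_hasDerivAt (fun y _ => primitive y) (cont.intervalIntegrable _ _)]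
  have at_wall : wallDecay c 1 = 1 := by simp [wallDecay]
  rw [at_wall]
  linarith [div_pos (wallDecay_pos c a) hc]

lemma integral_inv_sq_add_sq_le {δ : ℝ} (hδ : 0 < δ) (lam a b : ℝ) :
    ∫ y in a..b, (δ ^ 2 + (y - lam) ^ 2)⁻¹ ≤ 4 / δ := by
  have rescale (y : ℝ) :
      (δ ^ 2 + (y - lam) ^ 2)⁻¹ = (δ ^ 2)⁻¹ * (1 + (y / δ - lam / δ) ^ 2)⁻¹ := by
    field_simp
  simp only [rescale]
  rw [intervalIntegral.integral_const_mul,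
    integral_comp_div_sub (fun t => (1 + t ^ 2)⁻¹) hδ.ne', integral_inv_one_add_sq, smul_eq_mul,
    ← mul_assoc]
  have angle_le : Real.arctan (b / δ - lam / δ) - Real.arctan (a / δ - lam / δ) ≤ 4 := by
    linarith [Real.arctan_lt_pi_div_two (b / δ - lam / δ), Real.pi_lt_four,
      Real.neg_pi_div_two_lt_arctan (a / δ - lam / δ)]
  calc _ ≤ (δ ^ 2)⁻¹ * δ * 4 := by gcongr
    _ = 4 / δ := by field_simp

-- Peetre's inequality, with the growth in `t` absorbed into an exponential.
lemma one_add_mul_abs_add_sq_le {K t : ℝ} (hK : 0 ≤ K) (ht : 0 ≤ t) (u : ℝ) :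
    (1 + K * |t + u|) ^ 2 ≤ 8 * Real.exp (K * t) * (1 + K ^ 2 * u ^ 2) := by
  have peetre : 1 + K * |t + u| ≤ (1 + K * t) * (1 + K * |u|) := by
    have triangle := mul_le_mul_of_nonneg_left (abs_add_le t u) hK
    rw [abs_of_nonneg ht] at triangle
    nlinarith [mul_nonneg (mul_nonneg hK ht) (mul_nonneg hK (abs_nonneg u))]
  have linear_le_exp : 1 + K * t ≤ 2 * Real.exp (K * t / 2) := by
    linarith [Real.add_one_le_exp (K * t / 2)]
  calc (1 + K * |t + u|) ^ 2 ≤ (2 * Real.exp (K * t / 2) * (1 + K * |u|)) ^ 2 := by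
        gcongr
        exact peetre.trans (by gcongr)
    _ = 4 * Real.exp (K * t) * (1 + K * |u|) ^ 2 := by
        have exp_sq : Real.exp (K * t / 2) ^ 2 = Real.exp (K * t) := by
          rw [← Real.exp_nat_mul]
          congr 1
          push_cast
          ring
        rw [mul_pow, mul_pow, exp_sq]
        norm_num
    _ ≤ 4 * Real.exp (K * t) * (2 * (1 + K ^ 2 * u ^ 2)) := by
        gcongr
        rw [← sq_abs u]
        linarith [sq_nonneg (1 - K * |u|)]
    _ = 8 * Real.exp (K * t) * (1 + K ^ 2 * u ^ 2) := by ring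

lemma mul_wallDecay_le {K y : ℝ} (hK : 0 ≤ K) (hy : y ≤ 1) (lam : ℝ) :
    (1 + K * |1 - lam|) ^ 2 * wallDecay K y ≤ 8 * (1 + K ^ 2 * (y - lam) ^ 2) := by
  have bound := one_add_mul_abs_add_sq_le hK (sub_nonneg.2 hy) (y - lam)
  rw [sub_add_sub_cancel] at bound
  calc (1 + K * |1 - lam|) ^ 2 * wallDecay K y
      ≤ 8 * Real.exp (K * (1 - y)) * (1 + K ^ 2 * (y - lam) ^ 2) * wallDecay K y :=
        mul_le_mul_of_nonneg_right bound (wallDecay_pos K y).le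
    _ = 8 * (1 + K ^ 2 * (y - lam) ^ 2) := by
        rw [wallDecay, Real.exp_neg]
        field_simp

/-- The sinh profile of the boundary corrector: `φ'' = K² φ`, `φ (-1) = 0`, `φ 1 = 1`. -/
noncomputable def sinhProfile (K y : ℝ) : ℝ := Real.sinh (K * (y + 1)) / Real.sinh (2 * K)

lemma sinhProfile_neg_one (K : ℝ) : sinhProfile K (-1) = 0 := by simp [sinhProfile]

lemma sinhProfile_abs (K y : ℝ) : sinhProfile |K| y = sinhProfile K y := by
  rcases abs_cases K with ⟨h, -⟩ | ⟨h, -⟩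
  · rw [h]
  · rw [h, sinhProfile, sinhProfile, neg_mul, mul_neg, Real.sinh_neg, Real.sinh_neg, neg_div_neg_eq]

lemma contDiff_sinhProfile (K : ℝ) : ContDiff ℝ 1 (sinhProfile K) := by
  unfold sinhProfile
  fun_prop

lemma sinhProfile_nonneg {K y : ℝ} (hK : 0 ≤ K) (hy : -1 ≤ y) : 0 ≤ sinhProfile K y :=
  div_nonneg (Real.sinh_nonneg_iff.2 (mul_nonneg hK (by linarith)))
    (Real.sinh_nonneg_iff.2 (by positivity))

lemma sinhProfile_le_wallDecay {K y : ℝ} (hK : 0 < K) (hy : y ≤ 1) :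
    sinhProfile K y ≤ wallDecay K y := by
  rw [sinhProfile, div_le_iff₀ (Real.sinh_pos_iff.2 (by positivity)), wallDecay, Real.sinh_eq,
    Real.sinh_eq, mul_div_assoc', mul_sub, ← Real.exp_add, ← Real.exp_add]
  gcongr <;> nlinarith

lemma abs_deriv_sinhProfile_le {K : ℝ} (hK : 1 ≤ K) {y : ℝ} (hy : -1 ≤ y) :
    |deriv (sinhProfile K) y| ≤ 4 * K * wallDecay K y := by
  have sinh_pos : 0 < Real.sinh (2 * K) := Real.sinh_pos_iff.2 (by positivity)
  have deriv_eq : deriv (sinhProfile K) y = K * Real.cosh (K * (y + 1)) / Real.sinh (2 * K) := by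
    refine HasDerivAt.deriv ?_
    refine (((((hasDerivAt_id y).add_const 1).const_mul K).sinh).div_const _).congr_deriv ?_
    simp only [id]
    ring
  have cosh_le : Real.cosh (K * (y + 1)) ≤ Real.exp (K * (y + 1)) := by
    rw [Real.cosh_eq]
    have : Real.exp (-(K * (y + 1))) ≤ Real.exp (K * (y + 1)) :=
      Real.exp_le_exp.2 (neg_le_self (mul_nonneg (by positivity) (by linarith)))
    linarith
  have le_sinh : Real.exp (2 * K) ≤ 4 * Real.sinh (2 * K) := by
    rw [Real.sinh_eq]
    have : Real.exp (-(2 * K)) ≤ 1 := Real.exp_le_one_iff.2 (by linarith)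
    linarith [Real.add_one_le_exp (2 * K)]
  rw [deriv_eq, abs_of_pos (by positivity), div_le_iff₀ sinh_pos]
  calc K * Real.cosh (K * (y + 1)) ≤ K * Real.exp (K * (y + 1)) := by gcongr
    _ = K * wallDecay K y * Real.exp (2 * K) := by
        rw [wallDecay, mul_assoc, ← Real.exp_add]
        congr 2
        ring
    _ ≤ K * wallDecay K y * (4 * Real.sinh (2 * K)) :=
        mul_le_mul_of_nonneg_left le_sinh (mul_nonneg (by positivity) (wallDecay_pos K y).le)
    _ = 4 * K * wallDecay K y * Real.sinh (2 * K) := by ring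

end WallEstimates

section TestFunction

variable {lam δ K a c : ℝ}

lemma norm_cauchyKernel_sq (lam δ y : ℝ) :
    ‖cauchyKernel lam δ y‖ ^ 2 = (δ ^ 2 + (y - lam) ^ 2)⁻¹ := by
  rw [cauchyKernel, norm_inv, inv_pow, ← Complex.normSq_eq_norm_sq, Complex.normSq_apply]
  simp
  ring

lemma norm_cauchyKernel_le (hδ : 0 < δ) (lam y : ℝ) : ‖cauchyKernel lam δ y‖ ≤ δ⁻¹ := by
  refine le_of_sq_le_sq ?_ (inv_nonneg.2 hδ.le)
  rw [norm_cauchyKernel_sq, inv_pow]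
  exact inv_anti₀ (by positivity) (by linarith [sq_nonneg (y - lam)])

lemma hasDerivAt_cauchyKernel (hδ : δ ≠ 0) (lam y : ℝ) :
    HasDerivAt (cauchyKernel lam δ) (-cauchyKernel lam δ y ^ 2) y := by
  refine (((((hasDerivAt_id y).sub_const lam).ofReal_comp).sub_const _).fun_inv
    (cauchyKernel_denom_ne_zero hδ lam y)).congr_deriv ?_
  rw [cauchyKernel, inv_pow, id, Complex.ofReal_one, neg_div, one_div]

lemma contDiff_cauchyKernel (hδ : δ ≠ 0) (lam : ℝ) : ContDiff ℝ 1 (cauchyKernel lam δ) :=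
  ((Complex.ofRealCLM.contDiff.comp (contDiff_id.sub contDiff_const)).sub contDiff_const).inv
    (cauchyKernel_denom_ne_zero hδ lam)

/-- The sinh profile corrected by a wall layer of width `c⁻¹`, so as to vanish at both ends. -/
noncomputable def truncatedProfile (K c y : ℝ) : ℝ := sinhProfile K y * (1 - wallDecay c y)

lemma contDiff_truncatedProfile (K c : ℝ) : ContDiff ℝ 1 (truncatedProfile K c) :=
  (contDiff_sinhProfile K).mul (contDiff_const.sub (contDiff_wallDecay c))

lemma truncatedProfile_neg_one (K c : ℝ) : truncatedProfile K c (-1) = 0 := by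
  rw [truncatedProfile, sinhProfile_neg_one, zero_mul]

lemma truncatedProfile_one (K c : ℝ) : truncatedProfile K c 1 = 0 := by
  simp [truncatedProfile, wallDecay]

lemma abs_truncatedProfile_le (hK : 0 < K) (hc : 0 ≤ c) {y : ℝ} (hy : y ∈ Set.Icc (-1) 1) :
    |truncatedProfile K c y| ≤ wallDecay K y := by
  have profile_nonneg := sinhProfile_nonneg hK.le hy.1
  have layer_le := wallDecay_le_one hc hy.2
  rw [truncatedProfile, abs_of_nonneg (mul_nonneg profile_nonneg (sub_nonneg.2 layer_le))]
  exact (mul_le_of_le_one_right profile_nonneg (by linarith [wallDecay_pos c y])).trans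
    (sinhProfile_le_wallDecay hK hy.2)

lemma abs_deriv_truncatedProfile_le (hK : 1 ≤ K) (hc : 0 ≤ c) {y : ℝ} (hy : y ∈ Set.Icc (-1) 1) :
    |deriv (truncatedProfile K c) y| ≤ 4 * K * wallDecay K y + c * wallDecay c y := by
  have hK_pos : 0 < K := one_pos.trans_le hK
  have layer_pos := wallDecay_pos c y
  have layer_le := wallDecay_le_one hc hy.2
  have profile_nonneg := sinhProfile_nonneg hK_pos.le hy.1
  have profile_le : sinhProfile K y ≤ 1 :=
    (sinhProfile_le_wallDecay hK_pos hy.2).trans (wallDecay_le_one hK_pos.le hy.2)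
  have product_rule : deriv (truncatedProfile K c) y
      = deriv (sinhProfile K) y * (1 - wallDecay c y)
        + sinhProfile K y * -(c * wallDecay c y) :=
    (((contDiff_sinhProfile K).differentiable_one y).hasDerivAt.mul
      ((hasDerivAt_wallDecay c y).const_sub 1)).deriv
  rw [product_rule]
  refine (abs_add_le _ _).trans (add_le_add ?_ ?_)
  · rw [abs_mul, abs_of_nonneg (sub_nonneg.2 layer_le)]
    exact (mul_le_of_le_one_right (abs_nonneg _) (by linarith)).trans
      (abs_deriv_sinhProfile_le hK hy.1)
  · rw [abs_mul, abs_neg, abs_of_nonneg profile_nonneg, abs_of_nonneg (by positivity)]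
    exact mul_le_of_le_one_left (by positivity) profile_le

/-- The test function dual to the sinh profile: the truncated profile divided by
`y - lam - iδ`. -/
noncomputable def profileTest (K c lam δ y : ℝ) : ℂ :=
  truncatedProfile K c y * cauchyKernel lam δ y

lemma isDirichlet_profileTest (hδ : δ ≠ 0) (K c lam : ℝ) :
    IsDirichlet (profileTest K c lam δ) where
  contDiff := (Complex.ofRealCLM.contDiff.comp (contDiff_truncatedProfile K c)).mul
    (contDiff_cauchyKernel hδ lam)
  apply_neg_one := by rw [profileTest, truncatedProfile_neg_one, Complex.ofReal_zero, zero_mul]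
  apply_one := by rw [profileTest, truncatedProfile_one, Complex.ofReal_zero, zero_mul]

lemma norm_profileTest_le (hK : 0 < K) (hc : 0 ≤ c) {y : ℝ} (hy : y ∈ Set.Icc (-1) 1) :
    ‖profileTest K c lam δ y‖ ≤ wallDecay K y * ‖cauchyKernel lam δ y‖ := by
  rw [profileTest, norm_mul, Complex.norm_real, Real.norm_eq_abs]
  gcongr
  exact abs_truncatedProfile_le hK hc hy

lemma norm_deriv_profileTest_le (hδ : 0 < δ) (hK : 1 ≤ K) (hKδ : K ≤ δ⁻¹) (hc : 0 ≤ c) {y : ℝ}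
    (hy : y ∈ Set.Icc (-1) 1) :
    ‖deriv (profileTest K c lam δ) y‖
      ≤ (5 * δ⁻¹ * wallDecay K y + c * wallDecay c y) * ‖cauchyKernel lam δ y‖ := by
  have hK_pos : 0 < K := one_pos.trans_le hK
  have product_rule : deriv (profileTest K c lam δ) y
      = (deriv (truncatedProfile K c) y : ℝ) * cauchyKernel lam δ y
        + truncatedProfile K c y * -cauchyKernel lam δ y ^ 2 :=
    (((contDiff_truncatedProfile K c).differentiable_one y).hasDerivAt.ofReal_comp.mul
      (hasDerivAt_cauchyKernel hδ.ne' lam y)).deriv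
  have decay_pos := wallDecay_pos K y
  calc ‖deriv (profileTest K c lam δ) y‖
      ≤ |deriv (truncatedProfile K c) y| * ‖cauchyKernel lam δ y‖
        + |truncatedProfile K c y| * (‖cauchyKernel lam δ y‖ * ‖cauchyKernel lam δ y‖) := by
        rw [product_rule]
        refine (norm_add_le _ _).trans_eq ?_
        simp only [norm_mul, norm_neg, Complex.norm_real, Real.norm_eq_abs, sq]
    _ ≤ (4 * δ⁻¹ * wallDecay K y + c * wallDecay c y) * ‖cauchyKernel lam δ y‖
        + wallDecay K y * (δ⁻¹ * ‖cauchyKernel lam δ y‖) := by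
        gcongr
        · refine (abs_deriv_truncatedProfile_le hK hc hy).trans ?_
          gcongr
        · exact abs_truncatedProfile_le hK_pos hc hy
        · exact norm_cauchyKernel_le hδ lam y
    _ = (5 * δ⁻¹ * wallDecay K y + c * wallDecay c y) * ‖cauchyKernel lam δ y‖ := by ring

lemma weighted_profile_sq_le (hK : 0 ≤ K) (hδ : 0 < δ) (ha : 0 ≤ a)
    (ha_le : a ≤ 1 + K * |1 - lam|) {y : ℝ} (hy : y ≤ 1) :
    (a * (wallDecay K y * ‖cauchyKernel lam δ y‖)) ^ 2
      ≤ 8 * ((δ ^ 2 + (y - lam) ^ 2)⁻¹ + K ^ 2 * wallDecay K y) := by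
  have decay_pos := wallDecay_pos K y
  have decay_le := wallDecay_le_one hK hy
  have denom_pos : 0 < δ ^ 2 + (y - lam) ^ 2 := by positivity
  calc (a * (wallDecay K y * ‖cauchyKernel lam δ y‖)) ^ 2
      = a ^ 2 * wallDecay K y * (wallDecay K y * (δ ^ 2 + (y - lam) ^ 2)⁻¹) := by
        rw [mul_pow, mul_pow, norm_cauchyKernel_sq]
        ring
    _ ≤ (1 + K * |1 - lam|) ^ 2 * wallDecay K y
          * (wallDecay K y * (δ ^ 2 + (y - lam) ^ 2)⁻¹) := by gcongr
    _ ≤ 8 * (1 + K ^ 2 * (y - lam) ^ 2) * (wallDecay K y * (δ ^ 2 + (y - lam) ^ 2)⁻¹) :=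
        mul_le_mul_of_nonneg_right (mul_wallDecay_le hK hy lam) (by positivity)
    _ = 8 * (wallDecay K y * (δ ^ 2 + (y - lam) ^ 2)⁻¹
          + K ^ 2 * (wallDecay K y * ((y - lam) ^ 2 / (δ ^ 2 + (y - lam) ^ 2)))) := by
        field_simp
    _ ≤ 8 * ((δ ^ 2 + (y - lam) ^ 2)⁻¹ + K ^ 2 * wallDecay K y) := by
        gcongr
        · exact mul_le_of_le_one_left (by positivity) decay_le
        · exact mul_le_of_le_one_right decay_pos.le
            ((div_le_one denom_pos).2 (by linarith [sq_nonneg δ]))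

lemma weighted_layer_sq_le (hδ : 0 < δ) (hc : 0 < c)
    (hcδ : (δ * c) ^ 2 = 1 + δ⁻¹ * |1 - lam|) (ha : a ^ 2 ≤ (δ * c) ^ 3) {y : ℝ} (hy : y ≤ 1) :
    (a * (c * wallDecay c y * ‖cauchyKernel lam δ y‖)) ^ 2 ≤ 8 * c / δ ^ 3 * wallDecay c y := by
  have decay_pos := wallDecay_pos c y
  have one_le : 1 ≤ δ * c := by
    refine (one_le_sq_iff₀ (by positivity)).1 ?_
    rw [hcδ]
    exact le_add_of_nonneg_right (by positivity)
  have decay_le : wallDecay c y ≤ wallDecay δ⁻¹ y :=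
    wallDecay_anti ((inv_le_iff_one_le_mul₀' hδ).2 one_le) hy
  have peetre : (δ * c) ^ 4 * wallDecay δ⁻¹ y ≤ 8 * (1 + δ⁻¹ ^ 2 * (y - lam) ^ 2) := by
    have := mul_wallDecay_le (inv_nonneg.2 hδ.le) hy lam
    rwa [← hcδ, ← pow_mul] at this
  calc (a * (c * wallDecay c y * ‖cauchyKernel lam δ y‖)) ^ 2
      = a ^ 2 * (c ^ 2 * wallDecay c y * wallDecay c y * (δ ^ 2 + (y - lam) ^ 2)⁻¹) := by
        rw [mul_pow, mul_pow, norm_cauchyKernel_sq]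
        ring
    _ ≤ (δ * c) ^ 3 * (c ^ 2 * wallDecay c y * wallDecay δ⁻¹ y * (δ ^ 2 + (y - lam) ^ 2)⁻¹) := by
        gcongr
    _ = c / δ * wallDecay c y * (δ ^ 2 + (y - lam) ^ 2)⁻¹ * ((δ * c) ^ 4 * wallDecay δ⁻¹ y) := by
        field_simp
    _ ≤ c / δ * wallDecay c y * (δ ^ 2 + (y - lam) ^ 2)⁻¹
          * (8 * (1 + δ⁻¹ ^ 2 * (y - lam) ^ 2)) := by gcongr
    _ = 8 * c / δ ^ 3 * wallDecay c y := by field_simp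

lemma integral_profile_majorant_le (hK : 0 < K) (hδ : 0 < δ) (hKδ : K ≤ δ⁻¹) (lam : ℝ) :
    ∫ y in (-1 : ℝ)..1, 8 * ((δ ^ 2 + (y - lam) ^ 2)⁻¹ + K ^ 2 * wallDecay K y) ≤ 40 / δ := by
  have cont_decay : Continuous (wallDecay K) := (contDiff_wallDecay K).continuous
  have cont_inv : Continuous fun y => (δ ^ 2 + (y - lam) ^ 2)⁻¹ :=
    Continuous.inv₀ (by fun_prop) fun y => by positivity
  rw [intervalIntegral.integral_const_mul, intervalIntegral.integral_add
    (cont_inv.intervalIntegrable _ _) (Continuous.intervalIntegrable (by fun_prop) _ _),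
    intervalIntegral.integral_const_mul]
  calc _ ≤ 8 * (4 / δ + K ^ 2 * (1 / K)) := by
        gcongr
        · exact integral_inv_sq_add_sq_le hδ lam _ _
        · exact integral_wallDecay_le hK _
    _ = 8 * (4 / δ + K) := by field_simp
    _ ≤ 8 * (4 / δ + δ⁻¹) := by gcongr
    _ = 40 / δ := by ring

lemma weighted_nL2_sq_le {f : ℝ → ℂ} {g : ℝ → ℝ} (hf : Continuous f) (hg : Continuous g)
    (hfg : ∀ y ∈ Set.Icc (-1) 1, (a * ‖f y‖) ^ 2 ≤ g y) :
    (a * nL2 f) ^ 2 ≤ ∫ y in (-1 : ℝ)..1, g y := by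
  rw [mul_pow, nL2_sq, ← intervalIntegral.integral_const_mul]
  refine integral_mono_on (by norm_num) (Continuous.intervalIntegrable (by fun_prop) _ _)
    (hg.intervalIntegrable _ _) fun y hy => ?_
  rw [← mul_pow]
  exact hfg y hy

lemma continuous_profile_majorant (hδ : 0 < δ) (K lam : ℝ) :
    Continuous fun y => 8 * ((δ ^ 2 + (y - lam) ^ 2)⁻¹ + K ^ 2 * wallDecay K y) := by
  have cont_decay : Continuous (wallDecay K) := (contDiff_wallDecay K).continuous
  have cont_inv : Continuous fun y => (δ ^ 2 + (y - lam) ^ 2)⁻¹ :=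
    Continuous.inv₀ (by fun_prop) fun y => by positivity
  fun_prop

lemma weighted_nL2_profileTest_sq_le (hδ : 0 < δ) (hK : 0 < K) (hKδ : K ≤ δ⁻¹) (hc : 0 ≤ c)
    (ha : 0 ≤ a) (ha_le : a ≤ 1 + K * |1 - lam|) :
    (a * nL2 (profileTest K c lam δ)) ^ 2 ≤ 40 / δ := by
  refine (weighted_nL2_sq_le (isDirichlet_profileTest hδ.ne' K c lam).contDiff.continuous
    (continuous_profile_majorant hδ K lam) fun y hy => ?_).trans
    (integral_profile_majorant_le hK hδ hKδ lam)
  refine (pow_le_pow_left₀ (by positivity) ?_ 2).trans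
    (weighted_profile_sq_le hK.le hδ ha ha_le hy.2)
  gcongr
  exact norm_profileTest_le hK hc hy

lemma weighted_nL2_deriv_profileTest_sq_le (hδ : 0 < δ) (hK : 1 ≤ K) (hKδ : K ≤ δ⁻¹) (hc : 0 < c)
    (hcδ : (δ * c) ^ 2 = 1 + δ⁻¹ * |1 - lam|) (ha : 0 ≤ a) (ha_le : a ≤ 1 + K * |1 - lam|)
    (ha_sq_le : a ^ 2 ≤ (δ * c) ^ 3) :
    (a * nL2 (deriv (profileTest K c lam δ))) ^ 2 ≤ 2016 / δ ^ 3 := by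
  have hK_pos : 0 < K := one_pos.trans_le hK
  have cont_layer : Continuous (wallDecay c) := (contDiff_wallDecay c).continuous
  have cont_majorant := continuous_profile_majorant hδ K lam
  have pointwise (y : ℝ) (hy : y ∈ Set.Icc (-1) 1) :
      (a * ‖deriv (profileTest K c lam δ) y‖) ^ 2
        ≤ 50 * δ⁻¹ ^ 2 * (8 * ((δ ^ 2 + (y - lam) ^ 2)⁻¹ + K ^ 2 * wallDecay K y))
          + 2 * (8 * c / δ ^ 3 * wallDecay c y) := by
    set q := ‖cauchyKernel lam δ y‖
    calc (a * ‖deriv (profileTest K c lam δ) y‖) ^ 2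
        ≤ (a * ((5 * δ⁻¹ * wallDecay K y + c * wallDecay c y) * q)) ^ 2 := by
          gcongr
          exact norm_deriv_profileTest_le hδ hK hKδ hc.le hy
      _ = (5 * δ⁻¹ * (a * (wallDecay K y * q)) + a * (c * wallDecay c y * q)) ^ 2 := by ring
      _ ≤ 2 * ((5 * δ⁻¹ * (a * (wallDecay K y * q))) ^ 2
            + (a * (c * wallDecay c y * q)) ^ 2) := add_sq_le
      _ = 50 * δ⁻¹ ^ 2 * (a * (wallDecay K y * q)) ^ 2
            + 2 * (a * (c * wallDecay c y * q)) ^ 2 := by ring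
      _ ≤ _ := by
          gcongr
          · exact weighted_profile_sq_le hK_pos.le hδ ha ha_le hy.2
          · exact weighted_layer_sq_le hδ hc hcδ ha_sq_le hy.2
  refine (weighted_nL2_sq_le (isDirichlet_profileTest hδ.ne' K c lam).contDiff.continuous_deriv_one
    (by fun_prop) pointwise).trans ?_
  rw [intervalIntegral.integral_add (Continuous.intervalIntegrable (by fun_prop) _ _)
    (Continuous.intervalIntegrable (by fun_prop) _ _),
    intervalIntegral.integral_const_mul (50 * δ⁻¹ ^ 2), intervalIntegral.integral_const_mul 2,
    intervalIntegral.integral_const_mul (8 * c / δ ^ 3)]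
  calc _ ≤ 50 * δ⁻¹ ^ 2 * (40 / δ) + 2 * (8 * c / δ ^ 3 * (1 / c)) := by
        gcongr
        · exact integral_profile_majorant_le hK_pos hδ hKδ lam
        · exact integral_wallDecay_le hc _
    _ = 2016 / δ ^ 3 := by
        field_simp
        norm_num

lemma weighted_profileTest_le (hδ : 0 < δ) (hK : 1 ≤ K) (hKδ : K ≤ δ⁻¹) (hc : 0 < c)
    (hcδ : (δ * c) ^ 2 = 1 + δ⁻¹ * |1 - lam|) (ha : 0 ≤ a) (ha_le : a ≤ 1 + K * |1 - lam|)
    (ha_sq_le : a ^ 2 ≤ (δ * c) ^ 3) :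
    a * (nL2 (deriv (profileTest K c lam δ)) + nL2 (profileTest K c lam δ) / δ)
      ≤ 65 / √(δ ^ 3) := by
  have deriv_le := weighted_nL2_deriv_profileTest_sq_le hδ hK hKδ hc hcδ ha ha_le ha_sq_le
  have self_le := weighted_nL2_profileTest_sq_le hδ (one_pos.trans_le hK) hKδ hc.le ha ha_le
  refine le_of_sq_le_sq ?_ (by positivity)
  calc (a * (nL2 (deriv (profileTest K c lam δ)) + nL2 (profileTest K c lam δ) / δ)) ^ 2
      = (a * nL2 (deriv (profileTest K c lam δ)) + a * nL2 (profileTest K c lam δ) / δ) ^ 2 := by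
        ring
    _ ≤ 2 * ((a * nL2 (deriv (profileTest K c lam δ))) ^ 2
          + (a * nL2 (profileTest K c lam δ)) ^ 2 / δ ^ 2) := by
        rw [← div_pow]
        exact add_sq_le
    _ ≤ 2 * (2016 / δ ^ 3 + 40 / δ / δ ^ 2) := by gcongr
    _ = 4112 / δ ^ 3 := by
        field_simp
        norm_num
    _ ≤ 4225 / δ ^ 3 := by gcongr; norm_num
    _ = (65 / √(δ ^ 3)) ^ 2 := by
        rw [div_pow, Real.sq_sqrt (by positivity)]
        norm_num

end TestFunction

section Coefficients

variable {ν k ε δ lam M a c : ℝ} {w : ℝ → ℂ}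

lemma IsDirichlet.norm_sq_le (hw : IsDirichlet w) {y : ℝ} (hy : y ∈ Set.Icc (-1) 1) :
    ‖w y‖ ^ 2 ≤ (1 - y) * nL2 (deriv w) ^ 2 := by
  have cont_deriv : Continuous (deriv w) := hw.contDiff.continuous_deriv_one
  have w_eq : w y = -∫ t in y..1, deriv w t := by
    rw [integral_deriv_eq_sub (fun t _ => hw.contDiff.differentiable_one t)
      (cont_deriv.intervalIntegrable _ _), hw.apply_one, zero_sub, neg_neg]
  have cauchy_schwarz := integral_norm_mul_norm_sq_le hy.2 (continuous_const (y := (1 : ℂ)))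
    cont_deriv
  simp only [norm_one, one_mul, one_pow, intervalIntegral.integral_const, smul_eq_mul, mul_one]
    at cauchy_schwarz
  calc ‖w y‖ ^ 2 ≤ (∫ t in y..1, ‖deriv w t‖) ^ 2 := by
        rw [w_eq, norm_neg]
        gcongr
        exact norm_integral_le_integral_norm hy.2
    _ ≤ (1 - y) * ∫ t in y..1, ‖deriv w t‖ ^ 2 := cauchy_schwarz
    _ ≤ (1 - y) * nL2 (deriv w) ^ 2 := by
        rw [nL2_sq]
        refine mul_le_mul_of_nonneg_left ?_ (sub_nonneg.2 hy.2)
        exact integral_mono_interval hy.1 hy.2 le_rfl (.of_forall fun t => sq_nonneg _)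
          (Continuous.intervalIntegrable (by fun_prop) _ _)

lemma IsDirichlet.sqrt_mul_wallDecay_mul_norm_le (hw : IsDirichlet w) (hc : 0 ≤ c) {y : ℝ}
    (hy : y ∈ Set.Icc (-1) 1) :
    √c * (wallDecay c y * ‖w y‖) ≤ nL2 (deriv w) * wallDecay (c / 2) y := by
  have decay_pos := wallDecay_pos (c / 2) y
  have decay_sq : wallDecay c y = wallDecay (c / 2) y ^ 2 := by
    rw [wallDecay, wallDecay, ← Real.exp_nat_mul]
    congr 1
    push_cast
    ring
  have linear_le_exp : c * (1 - y) * wallDecay c y ≤ 1 := by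
    rw [wallDecay, Real.exp_neg, ← div_eq_mul_inv, div_le_one (Real.exp_pos _)]
    linarith [Real.add_one_le_exp (c * (1 - y))]
  refine le_of_sq_le_sq ?_ (mul_nonneg (nL2_nonneg _) decay_pos.le)
  calc (√c * (wallDecay c y * ‖w y‖)) ^ 2
      = c * wallDecay c y ^ 2 * ‖w y‖ ^ 2 := by
        rw [mul_pow, mul_pow, Real.sq_sqrt hc]
        ring
    _ ≤ c * wallDecay c y ^ 2 * ((1 - y) * nL2 (deriv w) ^ 2) := by
        gcongr
        exact hw.norm_sq_le hy
    _ = c * (1 - y) * wallDecay c y * (nL2 (deriv w) ^ 2 * wallDecay c y) := by ring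
    _ ≤ nL2 (deriv w) ^ 2 * wallDecay c y :=
        mul_le_of_le_one_left (mul_nonneg (sq_nonneg _) (wallDecay_pos c y).le) linear_le_exp
    _ = (nL2 (deriv w) * wallDecay (c / 2) y) ^ 2 := by rw [decay_sq, mul_pow]

lemma IsDirichlet.norm_integral_layer_le (hw : IsDirichlet w) (hc : 0 < c) {φ : ℝ → ℝ}
    (hφ : ∀ y ∈ Set.Icc (-1) 1, |φ y| ≤ 1) :
    c * √c * ‖∫ y in (-1 : ℝ)..1, ((φ y * wallDecay c y : ℝ) : ℂ) * w y‖
      ≤ 2 * nL2 (deriv w) := by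
  have cont_decay : Continuous (wallDecay (c / 2)) := (contDiff_wallDecay _).continuous
  have pointwise (y : ℝ) (hy : y ∈ Set.Icc (-1) 1) :
      ‖(√c : ℂ) * (((φ y * wallDecay c y : ℝ) : ℂ) * w y)‖
        ≤ nL2 (deriv w) * wallDecay (c / 2) y := by
    refine le_trans ?_ (hw.sqrt_mul_wallDecay_mul_norm_le hc.le hy)
    rw [norm_mul, norm_mul, Complex.norm_real, Complex.norm_real, Real.norm_eq_abs,
      Real.norm_eq_abs, abs_mul, abs_of_nonneg (Real.sqrt_nonneg c),
      abs_of_pos (wallDecay_pos c y)]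
    gcongr
    exact mul_le_of_le_one_left (wallDecay_pos c y).le (hφ y hy)
  calc c * √c * ‖∫ y in (-1 : ℝ)..1, ((φ y * wallDecay c y : ℝ) : ℂ) * w y‖
      = c * ‖∫ y in (-1 : ℝ)..1, (√c : ℂ) * (((φ y * wallDecay c y : ℝ) : ℂ) * w y)‖ := by
        rw [intervalIntegral.integral_const_mul, norm_mul, Complex.norm_real, Real.norm_eq_abs,
          abs_of_nonneg (Real.sqrt_nonneg c), mul_assoc]
    _ ≤ c * ∫ y in (-1 : ℝ)..1, nL2 (deriv w) * wallDecay (c / 2) y := by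
        gcongr
        exact norm_integral_le_of_norm_le (by norm_num)
          (.of_forall fun y hy => pointwise y (Set.Ioc_subset_Icc_self hy))
          (Continuous.intervalIntegrable (by fun_prop) _ _)
    _ ≤ c * (nL2 (deriv w) * (1 / (c / 2))) := by
        rw [intervalIntegral.integral_const_mul]
        gcongr
        · exact nL2_nonneg _
        · exact integral_wallDecay_le (half_pos hc) _
    _ = 2 * nL2 (deriv w) := by field_simp

lemma integral_sinhProfile_mul_eq (K c : ℝ) (hw : Continuous w) :
    ∫ y in (-1 : ℝ)..1, (sinhProfile K y : ℂ) * w y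
      = (∫ y in (-1 : ℝ)..1, (truncatedProfile K c y : ℂ) * w y)
        + ∫ y in (-1 : ℝ)..1, ((sinhProfile K y * wallDecay c y : ℝ) : ℂ) * w y := by
  have cont_profile : Continuous (sinhProfile K) := (contDiff_sinhProfile K).continuous
  have cont_truncated : Continuous (truncatedProfile K c) :=
    (contDiff_truncatedProfile K c).continuous
  have cont_decay : Continuous (wallDecay c) := (contDiff_wallDecay c).continuous
  rw [← intervalIntegral.integral_add (Continuous.intervalIntegrable (by fun_prop) _ _)
    (Continuous.intervalIntegrable (by fun_prop) _ _)]
  congr 1 with y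
  rw [truncatedProfile]
  push_cast
  ring

lemma IsResolventSolution.weighted_truncated_coefficient_le (hk : 1 ≤ |k|) (hδ : 0 < δ)
    (hkδ : |k| * δ ≤ 1) (hε : |ε| ≤ 1 / 400)
    (hw : IsResolventSolution (|k| * δ ^ 3) k (ε * (|k| * δ)) lam M w) (hc : 0 < c)
    (hcδ : (δ * c) ^ 2 = 1 + δ⁻¹ * |1 - lam|) (ha : 0 ≤ a) (ha_le : a ≤ 1 + |k| * |1 - lam|)
    (ha_sq_le : a ^ 2 ≤ (δ * c) ^ 3) :
    a * ‖∫ y in (-1 : ℝ)..1, (truncatedProfile |k| c y : ℂ) * w y‖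
      ≤ 20800 * (M / (|k| * √(δ ^ 3))) := by
  have hk_pos : 0 < |k| := one_pos.trans_le hk
  have hM := hw.bound_nonneg
  have duality := hw.duality_estimate (abs_pos.1 hk_pos) hδ
    ((le_mul_of_one_le_left hδ.le hk).trans hkδ) hkδ hε (isDirichlet_profileTest hδ.ne' |k| c lam)
  have test_le := weighted_profileTest_le hδ hk (by rwa [← one_div, le_div_iff₀ hδ]) hc hcδ
    ha ha_le ha_sq_le
  refine le_of_mul_le_mul_left ?_ hk_pos
  calc |k| * (a * ‖∫ y in (-1 : ℝ)..1, (truncatedProfile |k| c y : ℂ) * w y‖)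
      = a * (|k| * ‖∫ y in (-1 : ℝ)..1, (truncatedProfile |k| c y : ℂ) * w y‖) := by ring
    _ ≤ a * (320 * M * (nL2 (deriv (profileTest |k| c lam δ))
          + nL2 (profileTest |k| c lam δ) / δ)) := mul_le_mul_of_nonneg_left duality ha
    _ = 320 * M * (a * (nL2 (deriv (profileTest |k| c lam δ))
          + nL2 (profileTest |k| c lam δ) / δ)) := by ring
    _ ≤ 320 * M * (65 / √(δ ^ 3)) := by gcongr
    _ = |k| * (20800 * (M / (|k| * √(δ ^ 3)))) := by
        field_simp
        ring

lemma IsResolventSolution.weighted_layer_coefficient_le (hk : 1 ≤ |k|) (hδ : 0 < δ)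
    (hδ_le : δ ≤ 1) (hε : ε ≤ 1 / 400)
    (hw : IsResolventSolution (|k| * δ ^ 3) k (ε * (|k| * δ)) lam M w) (hc : 0 < c)
    (ha_sq_le : a ^ 2 ≤ (δ * c) ^ 3) :
    a * ‖∫ y in (-1 : ℝ)..1, ((sinhProfile |k| y * wallDecay c y : ℝ) : ℂ) * w y‖
      ≤ 30 * (M / (|k| * √(δ ^ 3))) := by
  have hk_pos : 0 < |k| := one_pos.trans_le hk
  set layer := ∫ y in (-1 : ℝ)..1, ((sinhProfile |k| y * wallDecay c y : ℝ) : ℂ) * w y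
  have layer_le : c * √c * ‖layer‖ ≤ 2 * nL2 (deriv w) :=
    hw.isDirichlet.norm_integral_layer_le hc fun y hy => by
      rw [abs_of_nonneg (sinhProfile_nonneg hk_pos.le hy.1)]
      exact (sinhProfile_le_wallDecay hk_pos hy.2).trans (wallDecay_le_one hk_pos.le hy.2)
  have deriv_le := (hw.resolvent_estimate (abs_pos.1 hk_pos) hδ hδ_le hε).1
  have a_le : a ≤ √(δ ^ 3) * (c * √c) := by
    refine le_of_sq_le_sq (ha_sq_le.trans_eq ?_) (by positivity)
    rw [mul_pow, mul_pow, mul_pow, Real.sq_sqrt (by positivity), Real.sq_sqrt hc.le]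
    ring
  calc a * ‖layer‖ ≤ √(δ ^ 3) * (c * √c) * ‖layer‖ := by gcongr
    _ = √(δ ^ 3) * (c * √c * ‖layer‖) := by ring
    _ ≤ √(δ ^ 3) * (2 * (15 * (M / (|k| * √(δ ^ 3) ^ 2)))) := by
        rw [Real.sq_sqrt (by positivity)]
        exact mul_le_mul_of_nonneg_left (by linarith) (Real.sqrt_nonneg _)
    _ = 30 * (M / (|k| * √(δ ^ 3))) := by
        field_simp
        ring

theorem IsResolventSolution.weighted_coefficient_le (hk : 1 ≤ |k|) (hδ : 0 < δ)
    (hkδ : |k| * δ ≤ 1) (hε : |ε| ≤ 1 / 400)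
    (hw : IsResolventSolution (|k| * δ ^ 3) k (ε * (|k| * δ)) lam M w) (hc : 0 < c)
    (hcδ : (δ * c) ^ 2 = 1 + δ⁻¹ * |1 - lam|) (ha : 0 ≤ a) (ha_le : a ≤ 1 + |k| * |1 - lam|)
    (ha_sq_le : a ^ 2 ≤ (δ * c) ^ 3) :
    a * ‖∫ y in (-1 : ℝ)..1, (sinhProfile k y : ℂ) * w y‖ ≤ 21000 * (M / (|k| * √(δ ^ 3))) := by
  have hM := hw.bound_nonneg
  have truncated_le := hw.weighted_truncated_coefficient_le hk hδ hkδ hε hc hcδ ha ha_le ha_sq_le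
  have layer_le := hw.weighted_layer_coefficient_le hk hδ
    ((le_mul_of_one_le_left hδ.le hk).trans hkδ) (le_of_abs_le hε) hc ha_sq_le
  have quotient_nonneg : 0 ≤ M / (|k| * √(δ ^ 3)) := by positivity
  simp only [← sinhProfile_abs k]
  rw [integral_sinhProfile_mul_eq |k| c hw.isDirichlet.contDiff.continuous]
  refine (mul_le_mul_of_nonneg_left (norm_add_le _ _) ha).trans ?_
  linarith

lemma one_add_rpow_three_fourths_sq_le {s t : ℝ} (hs : 0 ≤ s) (hst : s ≤ t) :
    ((1 + s) ^ (3 / 4 : ℝ)) ^ 2 ≤ √(1 + t) ^ 3 := by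
  have ht : 0 ≤ t := hs.trans hst
  rw [Real.sqrt_eq_rpow, ← Real.rpow_mul_natCast (by positivity),
    ← Real.rpow_mul_natCast (by positivity)]
  norm_num
  gcongr

/-- The critical-layer width `δ = (ν / |k|)^{1/3}`, at which `ν / δ² = |k| δ`. -/
noncomputable def layerWidth (ν k : ℝ) : ℝ := (ν / |k|) ^ (1 / 3 : ℝ)

lemma layerWidth_pow_three (hν : 0 ≤ ν) (k : ℝ) : layerWidth ν k ^ 3 = ν / |k| := by
  rw [layerWidth, ← Real.rpow_mul_natCast (by positivity)]
  norm_num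

lemma abs_mul_layerWidth (hν : 0 ≤ ν) (hk : k ≠ 0) :
    |k| * layerWidth ν k = ν ^ (1 / 3 : ℝ) * |k| ^ (2 / 3 : ℝ) := by
  have abs_pos : 0 < |k| := abs_pos.2 hk
  have abs_eq : |k| = |k| ^ (1 / 3 : ℝ) * |k| ^ (2 / 3 : ℝ) := by
    rw [← Real.rpow_add abs_pos]
    norm_num
  rw [layerWidth, Real.div_rpow hν abs_pos.le]
  nth_rw 1 [abs_eq]
  field_simp

lemma abs_mul_layerWidth_le_one (hν : 0 ≤ ν) (hk : k ≠ 0) (hνk : ν * k ^ 2 ≤ 1) :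
    |k| * layerWidth ν k ≤ 1 := by
  refine (pow_le_one_iff_of_nonneg (by unfold layerWidth; positivity) three_ne_zero).1 ?_
  rw [mul_pow, layerWidth_pow_three hν]
  calc |k| ^ 3 * (ν / |k|) = ν * |k| ^ 2 := by field_simp
    _ ≤ 1 := by rwa [sq_abs]

lemma inv_abs_mul_sqrt_layerWidth (hν : 0 < ν) (hk : k ≠ 0) :
    (|k| * √(layerWidth ν k ^ 3))⁻¹ = ν ^ (-1 / 2 : ℝ) * |k| ^ (-1 / 2 : ℝ) := by
  have abs_pos : 0 < |k| := abs_pos.2 hk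
  rw [layerWidth_pow_three hν.le, Real.sqrt_div hν.le, neg_div, Real.rpow_neg hν.le,
    Real.rpow_neg abs_pos.le, ← Real.sqrt_eq_rpow, ← Real.sqrt_eq_rpow, ← mul_inv]
  congr 1
  nth_rw 1 [← Real.mul_self_sqrt abs_pos.le]
  field_simp

theorem IsResolventSolution.coefficient_le (hν : 0 < ν) (hk : 1 ≤ |k|) (hνk : ν * k ^ 2 ≤ 1)
    (hε : |ε| ≤ 1 / 400)
    (hw : IsResolventSolution ν k (ε * ν ^ (1 / 3 : ℝ) * |k| ^ (2 / 3 : ℝ)) lam M w) :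
    (1 + |k * (lam - 1)|) ^ (3 / 4 : ℝ) * ‖∫ y in (-1 : ℝ)..1, (sinhProfile k y : ℂ) * w y‖
      ≤ 21000 * (ν ^ (-1 / 2 : ℝ) * |k| ^ (-1 / 2 : ℝ) * M) := by
  have hk_pos : 0 < |k| := one_pos.trans_le hk
  have hk_ne : k ≠ 0 := abs_pos.1 hk_pos
  set δ := layerWidth ν k with hδ_def
  have hδ : 0 < δ := Real.rpow_pos_of_pos (div_pos hν hk_pos) _
  have hkδ : |k| * δ ≤ 1 := abs_mul_layerWidth_le_one hν.le hk_ne hνk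
  have viscosity_eq : |k| * δ ^ 3 = ν := by
    rw [layerWidth_pow_three hν.le]
    field_simp
  rw [mul_assoc, ← abs_mul_layerWidth hν.le hk_ne, ← hδ_def, ← viscosity_eq] at hw
  have weight_eq : |k * (lam - 1)| = |k| * |1 - lam| := by rw [abs_mul, abs_sub_comm]
  have le_inv_width : |k| * |1 - lam| ≤ δ⁻¹ * |1 - lam| := by
    gcongr
    rwa [← one_div, le_div_iff₀ hδ]
  have layer_rate : δ * (√(1 + δ⁻¹ * |1 - lam|) / δ) = √(1 + δ⁻¹ * |1 - lam|) := by
    field_simp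
  rw [weight_eq, ← inv_abs_mul_sqrt_layerWidth hν hk_ne, ← div_eq_inv_mul]
  refine hw.weighted_coefficient_le (c := √(1 + δ⁻¹ * |1 - lam|) / δ) hk hδ hkδ hε
    (by positivity) ?_ (by positivity) ?_ ?_
  · rw [layer_rate, Real.sq_sqrt (by positivity)]
  · exact Real.rpow_le_self_of_one_le (le_add_of_nonneg_right (by positivity)) (by norm_num)
  · rw [layer_rate]
    exact one_add_rpow_three_fourths_sq_le (by positivity) le_inv_width

theorem statement6_general (hν : 0 < ν) (hk : 1 ≤ |k|) (hνk : ν * k ^ 2 ≤ 1) (hε : |ε| ≤ 1 / 400)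
    (hw : IsResolventSolution ν k (ε * ν ^ (1 / 3 : ℝ) * |k| ^ (2 / 3 : ℝ)) lam M w) :
    (1 + |k * (lam - 1)|) ^ (3 / 4 : ℝ) * ‖∫ y in Set.Icc (-1 : ℝ) 1,
          ((Real.sinh (k * (y + 1)) / Real.sinh (2 * k) : ℝ) : ℂ) * w y‖
        + (1 + |k * (lam + 1)|) ^ (3 / 4 : ℝ) * ‖∫ y in Set.Icc (-1 : ℝ) 1,
          ((Real.sinh (k * (1 - y)) / Real.sinh (2 * k) : ℝ) : ℂ) * w y‖
      ≤ 42000 * ν ^ (-1 / 2 : ℝ) * |k| ^ (-1 / 2 : ℝ) * M := by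
  have upper_le := hw.coefficient_le hν hk hνk hε
  have reflected : IsResolventSolution ν (-k) (ε * ν ^ (1 / 3 : ℝ) * |-k| ^ (2 / 3 : ℝ)) (-lam) M
      fun y => w (-y) := by
    rw [abs_neg]
    exact hw.comp_neg
  have lower_le := reflected.coefficient_le hν (by rwa [abs_neg]) (by rwa [neg_sq]) hε
  have weight_eq : -k * (-lam - 1) = k * (lam + 1) := by ring
  have profile_reflect (y : ℝ) :
      sinhProfile (-k) (-y) = Real.sinh (k * (1 - y)) / Real.sinh (2 * k) := by
    rw [← sinhProfile_abs, abs_neg, sinhProfile_abs, sinhProfile, neg_add_eq_sub]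
  rw [← integral_comp_neg_one_one, weight_eq, abs_neg] at lower_le
  simp only [neg_neg, profile_reflect] at lower_le
  simp only [setIntegral_Icc_eq_intervalIntegral (show (-1 : ℝ) ≤ 1 by norm_num)]
  simp only [sinhProfile] at upper_le
  linarith

end Coefficients

/-- `H^{-1}` bounds on the boundary-corrector coefficients `c₁, c₂`. -/
theorem statement6 :
    ∃ ε₀ C : ℝ, 0 < ε₀ ∧ ε₀ < 1 ∧ 0 < C ∧
      ∀ (ν : ℝ) (k : ℤ) (ε lam : ℝ) (wNa F : ℝ → ℂ) (c₁ c₂ : ℂ) (M : ℝ),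
        0 < ν → ν ≤ 1 → 1 ≤ |k| → ν * (k:ℝ)^2 ≤ 1 → 0 < ε → ε ≤ ε₀ →
        ContDiff ℝ 2 wNa → wNa (-1) = 0 → wNa 1 = 0 →
        (F = fun y : ℝ => -(ν : ℂ) * (deriv (deriv wNa) y - (k:ℂ)^2 * wNa y)
            + Complex.I * (k:ℂ) * ((y:ℂ) - (lam:ℂ)) * wNa y
            - ((ε * ν ^ ((1:ℝ)/3) * |(k:ℝ)| ^ ((2:ℝ)/3) : ℝ) : ℂ) * wNa y) →
        0 ≤ M → Dominates F M →
        c₁ = -∫ y in Set.Icc (-1:ℝ) 1,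
              ((Real.sinh ((k:ℝ) * (y + 1)) / Real.sinh (2 * (k:ℝ)) : ℝ) : ℂ) * wNa y →
        c₂ = ∫ y in Set.Icc (-1:ℝ) 1,
              ((Real.sinh ((k:ℝ) * (1 - y)) / Real.sinh (2 * (k:ℝ)) : ℝ) : ℂ) * wNa y →
        (1 + |(k:ℝ) * (lam - 1)|) ^ ((3:ℝ)/4) * ‖c₁‖
            + (1 + |(k:ℝ) * (lam + 1)|) ^ ((3:ℝ)/4) * ‖c₂‖
          ≤ C * ν ^ (-(1:ℝ)/2) * |(k:ℝ)| ^ (-(1:ℝ)/2) * M := by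
  refine ⟨1 / 400, 42000, by norm_num, by norm_num, by norm_num, ?_⟩
  rintro ν k ε lam w _ _ _ M hν - hk hνk hε_pos hε hw hw_left hw_right rfl hM hF rfl rfl
  rw [norm_neg]
  refine statement6_general hν (by exact_mod_cast hk) hνk (by rwa [abs_of_pos hε_pos])
    (.of_dominates hw hw_left hw_right hM ?_)
  simpa only [Complex.ofReal_intCast] using hF
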